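/- arXiv:1211.4451 — 2 statements merged into one kernel-verified Lean document; each statement's English description precedes it below -/
import Mathlib

section
/- Let G be a group. (1) For every bounded function b : G → ℝ and all g, h ∈ G, ⟨db, m₂(g,h)⟩ = 0, where db(u,v) := b(v) − b(uv) + b(u). (2) For every bounded 2-cocycle c on G with homogeneous representative c_x (the unique homogeneous bounded 2-cocycle with c − c_x the coboundary of a bounded function), one has ⟨c, m₂(g,h)⟩ = c_x(g,h) for all g, h ∈ G; explicitly, c_x(g,h) = c(g,h) − μ_c(g) + μ_c(gh) − μ_c(h), where μ_c(g) := Σ_{n≥1} 2⁻ⁿ·c(g^{2^{n−1}}, g^{2^{n−1}}). -/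
noncomputable section

open scoped ENNReal

instance : Fact ((1 : ℝ≥0∞) ≤ 1) := ⟨le_rfl⟩

/-- Dirac element of `ℓ¹(G×G)`. -/
def dirac {G : Type*} [Group G] (x : G × G) : lp (fun _ : G × G => ℝ) 1 :=
  letI := Classical.decEq (G × G)
  lp.single 1 x 1

/-- `m(g) = Σ_{n≥1} 2⁻ⁿ · δ_{(g^{2^{n-1}}, g^{2^{n-1}})} ∈ ℓ¹(G×G)`. -/
def mm {G : Type*} [Group G] (g : G) : lp (fun _ : G × G => ℝ) 1 :=
  ∑' n : ℕ, ((1 : ℝ) / 2) ^ (n + 1) • dirac (g ^ 2 ^ n, g ^ 2 ^ n)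

/-- `m₂(g,h) = δ_{(g,h)} − m(g) + m(gh) − m(h) ∈ ℓ¹(G×G)`. -/
def m2 {G : Type*} [Group G] (g h : G) : lp (fun _ : G × G => ℝ) 1 :=
  dirac (g, h) - mm g + mm (g * h) - mm h

/-- A bounded real 2-cocycle on a group `G` (normalized: vanishing when one argument is 1). -/
def IsBounded2Cocycle {G : Type*} [Group G] (c : G → G → ℝ) : Prop :=
  (∃ k : ℝ, ∀ g h : G, |c g h| ≤ k) ∧
  (∀ g h k : G, c h k - c (g * h) k + c g (h * k) - c g h = 0) ∧
  (∀ g : G, c g 1 = 0) ∧ (∀ g : G, c 1 g = 0)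

/-- A homogeneous 2-cocycle: it vanishes on pairs of powers of a single element. -/
def IsHomogeneous2Cocycle {G : Type*} [Group G] (c : G → G → ℝ) : Prop :=
  ∀ (g : G) (n m : ℕ), c (g ^ n) (g ^ m) = 0

/-!
Pairing with `m₂` sends a bounded `c` to `c - dμ_c`, where `μ_c` averages `c` along the diagonal
pairs `(g ^ 2 ^ n, g ^ 2 ^ n)` with weights `2⁻⁽ⁿ⁺¹⁾`. On such a pair a coboundary `db` equals
`2 • b (g ^ 2 ^ n) - b (g ^ 2 ^ (n + 1))`, so for bounded `b` the series defining `μ_{db}`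
telescopes to `b`. If `c = cx + db` and `cx` vanishes on the diagonal, then `μ_c = μ_{db} = b`,
whence `c - dμ_c = cx`; the case `cx = 0` says that `db` pairs to zero.
-/

section Coboundary

variable {M E : Type*}

/-- The coboundary `db` of a 1-cochain `b`, for the trivial action of `M` on the coefficients;
the sign convention is that of the inhomogeneous bar complex. -/
def coboundary [Mul M] [AddCommGroup E] (b : M → E) (u v : M) : E :=
  b v - b (u * v) + b u

theorem norm_coboundary_le [Mul M] [SeminormedAddCommGroup E] {b : M → E} {k : ℝ}
    (hb : ∀ x, ‖b x‖ ≤ k) (u v : M) :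
    ‖coboundary b u v‖ ≤ k + k + k :=
  norm_add_le_of_le (norm_sub_le_of_le (hb v) (hb (u * v))) (hb u)

variable [Monoid M]

theorem smul_coboundary_pow_two_pow [AddCommGroup E] [Module ℝ E] (b : M → E) (g : M) (n : ℕ) :
    ((1 : ℝ) / 2) ^ (n + 1) • coboundary b (g ^ 2 ^ n) (g ^ 2 ^ n) =
      ((1 : ℝ) / 2) ^ n • b (g ^ 2 ^ n) - ((1 : ℝ) / 2) ^ (n + 1) • b (g ^ 2 ^ (n + 1)) := by
  rw [coboundary, ← pow_add, ← two_mul, ← pow_succ']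
  module

/-- The weighted average `μ_c(g) = ∑_{n ≥ 1} 2⁻ⁿ • c (g ^ 2 ^ (n - 1), g ^ 2 ^ (n - 1))` of a
2-cochain `c`, with the index shifted to start at `0`. -/
def dyadicMean [AddCommMonoid E] [TopologicalSpace E] [Module ℝ E]
    (c : M → M → E) (g : M) : E :=
  ∑' n : ℕ, ((1 : ℝ) / 2) ^ (n + 1) • c (g ^ 2 ^ n) (g ^ 2 ^ n)

theorem dyadicMean_congr_diagonal [AddCommMonoid E] [TopologicalSpace E] [Module ℝ E]
    {c c' : M → M → E} (h : ∀ x, c x x = c' x x) (g : M) :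
    dyadicMean c g = dyadicMean c' g := by
  simp only [dyadicMean, h]

variable [NormedAddCommGroup E] [NormedSpace ℝ E] [CompleteSpace E]

theorem dyadicMean_coboundary {b : M → E} {k : ℝ} (hb : ∀ x, ‖b x‖ ≤ k) (g : M) :
    dyadicMean (coboundary b) g = b g := by
  have hsum : Summable fun n : ℕ ↦ ((1 : ℝ) / 2) ^ n • b (g ^ 2 ^ n) := by
    refine .of_norm_bounded (summable_geometric_two.mul_right k) fun n ↦ ?_
    rw [norm_smul, Real.norm_of_nonneg (by positivity)]
    gcongr
    exact hb _
  rw [dyadicMean, tsum_congr (smul_coboundary_pow_two_pow b g),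
    hsum.tsum_sub ((summable_nat_add_iff 1).2 hsum), hsum.tsum_eq_zero_add]
  simp

theorem eq_sub_dyadicMean_of_sub_eq_coboundary {c cx : M → M → E} {b : M → E} {k : ℝ}
    (hb : ∀ x, ‖b x‖ ≤ k) (hdiag : ∀ x, cx x x = 0)
    (hcob : ∀ u v, c u v - cx u v = coboundary b u v) (g h : M) :
    cx g h = c g h - dyadicMean c g + dyadicMean c (g * h) - dyadicMean c h := by
  have hmean (x : M) : dyadicMean c x = b x := by
    have hc (y : M) : c y y = coboundary b y y := by rw [← hcob, hdiag, sub_zero]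
    rw [dyadicMean_congr_diagonal hc, dyadicMean_coboundary hb]
  rw [hmean, hmean, hmean, ← sub_sub_cancel (c g h) (cx g h), hcob, coboundary]
  abel

end Coboundary

section Pairing

variable {X E : Type*} [NormedAddCommGroup E] [NormedSpace ℝ E] [CompleteSpace E]

/-- The duality pairing `⟨f, z⟩ = ∑ x, z x • f x` of `z ∈ ℓ¹(X)` with a bounded `f : X → E`;
the summable argument comes first. -/
def lpOnePairing : lp (fun _ : X ↦ ℝ) 1 →L[ℝ] lp (fun _ : X ↦ E) ∞ →L[ℝ] E :=
  lp.dualPairing 1 ∞ (fun _ ↦ ContinuousLinearMap.lsmul ℝ ℝ) (K := 1)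
    fun _ ↦ ContinuousLinearMap.opNorm_lsmul_le

theorem lpOnePairing_apply (z : lp (fun _ : X ↦ ℝ) 1) (f : lp (fun _ : X ↦ E) ∞) :
    lpOnePairing z f = ∑' x, z x • f x :=
  rfl

theorem lpOnePairing_single [DecidableEq X] (x : X) (a : ℝ) (f : lp (fun _ : X ↦ E) ∞) :
    lpOnePairing (lp.single 1 x a) f = a • f x := by
  rw [lpOnePairing_apply, tsum_eq_single x fun y hy ↦ by simp [hy]]
  simp

end Pairing

section DiagonalChain

variable {G E : Type*} [Group G] [NormedAddCommGroup E] [NormedSpace ℝ E] [CompleteSpace E]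

theorem norm_dirac (x : G × G) : ‖dirac x‖ = 1 := by
  simp [dirac, lp.norm_single]

theorem lpOnePairing_dirac (x : G × G) (f : lp (fun _ : G × G ↦ E) ∞) :
    lpOnePairing (dirac x) f = f x := by
  let := Classical.decEq (G × G)
  exact (lpOnePairing_single x 1 f).trans (one_smul ℝ (f x))

theorem hasSum_mm (g : G) :
    HasSum (fun n : ℕ ↦ ((1 : ℝ) / 2) ^ (n + 1) • dirac (g ^ 2 ^ n, g ^ 2 ^ n)) (mm g) := by
  refine (Summable.of_norm_bounded ((summable_nat_add_iff 1).2 summable_geometric_two)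
    fun n ↦ ?_).hasSum
  rw [norm_smul, norm_dirac, mul_one, Real.norm_of_nonneg (by positivity)]

theorem lpOnePairing_mm (g : G) (f : lp (fun _ : G × G ↦ E) ∞) :
    lpOnePairing (mm g) f = dyadicMean (fun u v ↦ f (u, v)) g := by
  have h := (hasSum_mm g).mapL (lpOnePairing.flip f)
  simp only [map_smul, ContinuousLinearMap.flip_apply, lpOnePairing_dirac] at h
  exact h.tsum_eq.symm

theorem tsum_m2_smul {c : G → G → E} {k : ℝ} (hc : ∀ u v, ‖c u v‖ ≤ k) (g h : G) :
    ∑' uv : G × G, m2 g h uv • c uv.1 uv.2 =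
      c g h - dyadicMean c g + dyadicMean c (g * h) - dyadicMean c h := by
  have hmem : Memℓp (fun uv : G × G ↦ c uv.1 uv.2) ∞ :=
    memℓp_infty ⟨k, Set.forall_mem_range.2 fun uv ↦ hc uv.1 uv.2⟩
  change lpOnePairing (m2 g h) ⟨_, hmem⟩ = _
  simp only [m2, map_add, map_sub, add_apply, sub_apply, lpOnePairing_dirac, lpOnePairing_mm]

end DiagonalChain

theorem stmt_9_general {G E : Type*} [Group G] [NormedAddCommGroup E] [NormedSpace ℝ E]
    [CompleteSpace E] :
    (∀ b : G → E, (∃ k : ℝ, ∀ x : G, ‖b x‖ ≤ k) → ∀ g h : G,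
      ∑' uv : G × G, m2 g h uv • coboundary b uv.1 uv.2 = 0) ∧
    (∀ c cx : G → G → E, (∃ k : ℝ, ∀ g h : G, ‖c g h‖ ≤ k) → (∀ g : G, cx g g = 0) →
      (∃ b : G → E, (∃ k : ℝ, ∀ x : G, ‖b x‖ ≤ k) ∧
        ∀ g h : G, c g h - cx g h = coboundary b g h) →
      ∀ g h : G,
        (∑' uv : G × G, m2 g h uv • c uv.1 uv.2 = cx g h) ∧
        cx g h = c g h - dyadicMean c g + dyadicMean c (g * h) - dyadicMean c h) := by
  constructor
  · rintro b ⟨k, hb⟩ g h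
    rw [tsum_m2_smul (norm_coboundary_le hb)]
    exact (eq_sub_dyadicMean_of_sub_eq_coboundary (cx := 0) hb (fun _ ↦ rfl)
      (fun _ _ ↦ sub_zero _) g h).symm
  · rintro c cx ⟨k, hc⟩ hdiag ⟨b, ⟨l, hb⟩, hcob⟩ g h
    have hcx := eq_sub_dyadicMean_of_sub_eq_coboundary hb hdiag hcob g h
    exact ⟨(tsum_m2_smul hc g h).trans hcx.symm, hcx⟩

/-- (1) `⟨db, m₂(g,h)⟩ = 0` for every bounded `b`; (2) for a bounded 2-cocycle
`c` with homogeneous representative `c_x`, `⟨c, m₂(g,h)⟩ = c_x(g,h)`, explicitly given by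
`c_x(g,h) = c(g,h) − μ_c(g) + μ_c(gh) − μ_c(h)`. -/
theorem stmt_9 {G : Type*} [Group G] :
    (∀ b : G → ℝ, (∃ k : ℝ, ∀ x : G, |b x| ≤ k) → ∀ g h : G,
      ∑' uv : G × G, m2 g h uv * (b uv.2 - b (uv.1 * uv.2) + b uv.1) = 0) ∧
    (∀ c cx : G → G → ℝ,
      IsBounded2Cocycle c →
      IsBounded2Cocycle cx → IsHomogeneous2Cocycle cx →
      (∃ b : G → ℝ, (∃ k : ℝ, ∀ x : G, |b x| ≤ k) ∧
        ∀ g h : G, c g h - cx g h = b h - b (g * h) + b g) →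
      ∀ g h : G,
        (∑' uv : G × G, m2 g h uv * c uv.1 uv.2 = cx g h) ∧
        cx g h = c g h
          - (∑' n : ℕ, ((1 : ℝ) / 2) ^ (n + 1) * c (g ^ 2 ^ n) (g ^ 2 ^ n))
          + (∑' n : ℕ, ((1 : ℝ) / 2) ^ (n + 1) * c ((g * h) ^ 2 ^ n) ((g * h) ^ 2 ^ n))
          - (∑' n : ℕ, ((1 : ℝ) / 2) ^ (n + 1) * c (h ^ 2 ^ n) (h ^ 2 ^ n))) := by
  refine ⟨stmt_9_general.1, fun c cx hc _ hcx ↦ stmt_9_general.2 c cx hc.1 fun g ↦ ?_⟩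
  simpa only [pow_one] using hcx g 1 1
end
end

section
/- Let G be a group and z ∈ ℓ¹(G×G). Then ⟨c, z⟩ = 0 for every bounded function c : G × G → ℝ satisfying the 2-cocycle identity c(h,k) − c(gh,k) + c(g,hk) − c(g,h) = 0 (for all g,h,k ∈ G) if and only if z belongs to the closure of the ℝ-linear span of B₂ in ℓ¹(G×G). -/
noncomputable section

open scoped ENNReal

/-- The set of boundary elements of `ℓ¹(G×G)`. -/
def B2 (G : Type*) [Group G] : Set (lp (fun _ : G × G => ℝ) 1) :=
  {x | ∃ a b k : G, x = dirac (b, k) - dirac (a * b, k) + dirac (a, b * k) - dirac (a, b)}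

/-! By Hahn–Banach, `z` lies in the closed span of `B₂` exactly when every continuous functional on
`ℓ¹(G×G)` that kills `B₂` kills `z`. Since `(ℓ¹)* = ℓ^∞`, these functionals are the bounded
functions `c`, and `⟨c, ·⟩` kills the boundary of `(g, h, k)` exactly when `c` satisfies the cocycle
identity at `(g, h, k)`. -/

open scoped lp

section HahnBanach

variable {𝕜 E : Type*} [RCLike 𝕜]

theorem forall_mem_apply_eq_zero_of_forall_mem_re_lt [AddCommMonoid E] [Module 𝕜 E]
    {p : Submodule 𝕜 E} {f : E →ₗ[𝕜] 𝕜} {u : ℝ} (hf : ∀ y ∈ p, RCLike.re (f y) < u) :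
    ∀ y ∈ p, f y = 0 := by
  intro y hy
  by_contra hfy
  have hlt := hf (((u : 𝕜) / f y) • y) (p.smul_mem _ hy)
  rw [map_smul, smul_eq_mul, div_mul_cancel₀ _ hfy, RCLike.ofReal_re] at hlt
  exact hlt.false

variable [AddCommGroup E] [TopologicalSpace E] [IsTopologicalAddGroup E]
  [Module 𝕜 E] [ContinuousSMul 𝕜 E] [Module ℝ E] [IsScalarTower ℝ 𝕜 E] [LocallyConvexSpace ℝ E]

theorem exists_strongDual_eq_zero_on_of_notMem_closure {p : Submodule 𝕜 E} {x : E}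
    (hx : x ∉ closure (p : Set E)) :
    ∃ f : StrongDual 𝕜 E, (∀ y ∈ p, f y = 0) ∧ f x ≠ 0 := by
  have : ContinuousSMul ℝ E := IsScalarTower.continuousSMul 𝕜
  obtain ⟨f, u, hfu, hux⟩ := RCLike.geometric_hahn_banach_closed_point (𝕜 := 𝕜)
    (p.restrictScalars ℝ).convex.closure isClosed_closure hx
  have hlt : ∀ y ∈ p, RCLike.re (f y) < u := fun y hy => hfu y (subset_closure hy)
  have hu : 0 < u := by simpa using hlt 0 p.zero_mem
  refine ⟨f, forall_mem_apply_eq_zero_of_forall_mem_re_lt (f := f.toLinearMap) hlt, fun hfx => ?_⟩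
  exact (hu.trans hux).ne' (by rw [hfx, map_zero])

theorem mem_closure_span_iff_forall_strongDual {s : Set E} {x : E} :
    x ∈ closure (Submodule.span 𝕜 s : Set E) ↔
      ∀ f : StrongDual 𝕜 E, (∀ y ∈ s, f y = 0) → f x = 0 := by
  constructor
  · intro hx f hf
    have hspan : Submodule.span 𝕜 s ≤ f.ker := Submodule.span_le.2 hf
    exact closure_minimal hspan f.isClosed_ker hx
  · contrapose!
    intro hx
    obtain ⟨f, hf, hfx⟩ := exists_strongDual_eq_zero_on_of_notMem_closure hx
    exact ⟨f, fun y hy => hf y (Submodule.subset_span hy), hfx⟩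

end HahnBanach

section Duality

variable {ι 𝕜 : Type*} [RCLike 𝕜]

/-- The functional `⟨c, ·⟩ : z ↦ ∑ i, z i * c i` on `ℓ¹` given by a bounded family `c ∈ ℓ^∞`; these
are all the continuous functionals on `ℓ¹`. -/
def linftyPairing (c : ℓ^∞(ι, 𝕜)) : StrongDual 𝕜 ℓ¹(ι, 𝕜) :=
  lp.dualPairing ∞ 1 (fun _ => (ContinuousLinearMap.mul 𝕜 𝕜).flip) (K := 1) (fun _ => by simp) c

theorem linftyPairing_apply (c : ℓ^∞(ι, 𝕜)) (z : ℓ¹(ι, 𝕜)) :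
    linftyPairing c z = ∑' i, z i * c i :=
  rfl

theorem linftyPairing_single [DecidableEq ι] (c : ℓ^∞(ι, 𝕜)) (i : ι) (a : 𝕜) :
    linftyPairing c (lp.single 1 i a) = a * c i := by
  rw [linftyPairing_apply, tsum_eq_single i fun j hj => by simp [hj], lp.single_apply_self]

theorem memℓp_infty_strongDual_apply_single [DecidableEq ι] (f : StrongDual 𝕜 ℓ¹(ι, 𝕜)) :
    Memℓp (fun i => f (lp.single 1 i 1)) ∞ := by
  refine memℓp_infty ⟨‖f‖, ?_⟩
  rintro _ ⟨i, rfl⟩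
  simpa [lp.norm_single] using f.le_opNorm (lp.single 1 i 1)

theorem linftyPairing_surjective :
    Function.Surjective (linftyPairing : ℓ^∞(ι, 𝕜) → StrongDual 𝕜 ℓ¹(ι, 𝕜)) := by
  classical
  intro f
  refine ⟨⟨_, memℓp_infty_strongDual_apply_single f⟩,
    lp.ext_continuousLinearMap ENNReal.one_ne_top fun i => ?_⟩
  ext
  simp [linftyPairing_single]

theorem mem_closure_span_iff_forall_linftyPairing {s : Set ℓ¹(ι, 𝕜)} {z : ℓ¹(ι, 𝕜)} :
    z ∈ closure (Submodule.span 𝕜 s : Set ℓ¹(ι, 𝕜)) ↔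
      ∀ c : ℓ^∞(ι, 𝕜), (∀ y ∈ s, linftyPairing c y = 0) → linftyPairing c z = 0 := by
  rw [mem_closure_span_iff_forall_strongDual, linftyPairing_surjective.forall]

end Duality

section Boundaries

variable {G : Type*} [Group G]

theorem linftyPairing_dirac (c : ℓ^∞(G × G, ℝ)) (x : G × G) : linftyPairing c (dirac x) = c x := by
  classical
  simp [dirac, linftyPairing_single]

theorem forall_mem_B2_linftyPairing_eq_zero_iff (c : ℓ^∞(G × G, ℝ)) :
    (∀ y ∈ B2 G, linftyPairing c y = 0) ↔
      ∀ g h k : G, c (h, k) - c (g * h, k) + c (g, h * k) - c (g, h) = 0 := by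
  have hboundary (g h k : G) :
      linftyPairing c (dirac (h, k) - dirac (g * h, k) + dirac (g, h * k) - dirac (g, h)) =
        c (h, k) - c (g * h, k) + c (g, h * k) - c (g, h) := by
    simp only [map_add, map_sub, linftyPairing_dirac]
  constructor
  · intro hc g h k
    rw [← hboundary]
    exact hc _ ⟨g, h, k, rfl⟩
  · rintro hc _ ⟨g, h, k, rfl⟩
    rw [hboundary, hc]

end Boundaries

/-- Hahn–Banach separation for ℓ¹-chains: `z ∈ ℓ¹(G×G)` pairs to zero with
every bounded function satisfying the 2-cocycle identity iff `z` lies in the closure of the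
span of the boundaries `B₂`. -/
theorem stmt_12 {G : Type*} [Group G] (z : lp (fun _ : G × G => ℝ) 1) :
    (∀ c : G → G → ℝ,
      (∃ k : ℝ, ∀ g h : G, |c g h| ≤ k) →
      (∀ g h k : G, c h k - c (g * h) k + c g (h * k) - c g h = 0) →
      ∑' uv : G × G, z uv * c uv.1 uv.2 = 0) ↔
    z ∈ closure ((Submodule.span ℝ (B2 G) : Submodule ℝ _) :
        Set (lp (fun _ : G × G => ℝ) 1)) := by
  rw [mem_closure_span_iff_forall_linftyPairing]
  constructor
  · intro h c hc
    have hbdd (g k : G) : |c (g, k)| ≤ ‖c‖ := lp.norm_apply_le_norm ENNReal.top_ne_zero c (g, k)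
    exact h (fun g k => c (g, k)) ⟨‖c‖, hbdd⟩ ((forall_mem_B2_linftyPairing_eq_zero_iff c).1 hc)
  · rintro h c ⟨C, hC⟩ hcocycle
    have hmem : Memℓp (fun x : G × G => c x.1 x.2) ∞ :=
      memℓp_infty ⟨C, Set.forall_mem_range.2 fun x => hC x.1 x.2⟩
    exact h ⟨_, hmem⟩ ((forall_mem_B2_linftyPairing_eq_zero_iff _).2 hcocycle)
end
end
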